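/- arXiv:2512.13229 — 2 statements merged into one kernel-verified Lean document; each statement's English description precedes it below -/
import Mathlib

section
/- Let P be a symmetric positive definite n×n matrix, W_ω, W_v, P̄_e, Π symmetric positive definite matrices of sizes p, q, m, s, and α, β_ω, β_v, β_e, β_r ≥ 0. Define the symmetric block matrix 𝓜 of size n+p+q+m+s+1 with (1,1) block Aᵀ P + P A, (2,1) block Gᵀ P, (3,1) block B_vᵀ P, (4,1) block B_eᵀ P, (5,1) block B_rᵀ P, and all other blocks zero; 𝓝 = diag(P, 0, 0, 0, 0, −1); S_ω = diag(0, −W_ω, 0, 0, 0, 1); S_v = diag(0, 0, −W_v, 0, 0, 1); S_e = diag(0, 0, 0, −P̄_e, 0, 1); S_r = diag(0, 0, 0, 0, −Π, 1). If −𝓜 − α 𝓝 − β_ω S_ω − β_v S_v − β_e S_e − β_r S_r is positive semidefinite, then for every ζ ∈ ℝⁿ and all vectors ω, v, ē, r with ωᵀ W_ω ω ≤ 1, vᵀ W_v v ≤ 1, ēᵀ P̄_e ē ≤ 1, rᵀ Π r ≤ 1, it holds that 2 ζᵀ P (A ζ + G ω + B_v v + B_e ē + B_r r) ≤ α (1 −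 ζᵀ P ζ). -/
open Matrix MeasureTheory Filter

/-- Index type for the stacked vector κ = (ζ, ω, v, ē, r, 1). -/
abbrev Idx (n p q m s : ℕ) := Fin n ⊕ Fin p ⊕ Fin q ⊕ Fin m ⊕ Fin s ⊕ Fin 1

noncomputable section

variable {n p q m s : ℕ}

/-- The stacked vector κ = (ζ, ω, v, ē, r, 1). -/
def stack (z : Fin n → ℝ) (w : Fin p → ℝ) (v : Fin q → ℝ) (e : Fin m → ℝ)
    (r : Fin s → ℝ) : Idx n p q m s → ℝ :=
  Sum.elim z (Sum.elim w (Sum.elim v (Sum.elim e (Sum.elim r (fun _ => 1)))))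

/-- The symmetric block matrix 𝓜 with (1,1) block Aᵀ P + P A and
(2,1),(3,1),(4,1),(5,1) blocks GᵀP, Bvᵀ P, Beᵀ P, Brᵀ P, all other blocks zero. -/
def bigM (P A : Matrix (Fin n) (Fin n) ℝ) (G : Matrix (Fin n) (Fin p) ℝ)
    (Bv : Matrix (Fin n) (Fin q) ℝ) (Be : Matrix (Fin n) (Fin m) ℝ)
    (Br : Matrix (Fin n) (Fin s) ℝ) : Matrix (Idx n p q m s) (Idx n p q m s) ℝ :=
  Matrix.of fun i j => match i, j with
  | Sum.inl i, Sum.inl j => (Aᵀ * P + P * A) i j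
  | Sum.inl i, Sum.inr (Sum.inl j) => (P * G) i j
  | Sum.inr (Sum.inl i), Sum.inl j => (Gᵀ * P) i j
  | Sum.inl i, Sum.inr (Sum.inr (Sum.inl j)) => (P * Bv) i j
  | Sum.inr (Sum.inr (Sum.inl i)), Sum.inl j => (Bvᵀ * P) i j
  | Sum.inl i, Sum.inr (Sum.inr (Sum.inr (Sum.inl j))) => (P * Be) i j
  | Sum.inr (Sum.inr (Sum.inr (Sum.inl i))), Sum.inl j => (Beᵀ * P) i j
  | Sum.inl i, Sum.inr (Sum.inr (Sum.inr (Sum.inr (Sum.inl j)))) => (P * Br) i j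
  | Sum.inr (Sum.inr (Sum.inr (Sum.inr (Sum.inl i)))), Sum.inl j => (Brᵀ * P) i j
  | _, _ => 0

/-- The congruence-transformed block matrix 𝓜̃ with (1,1) block Y Aᵀ + A Y and
(2,1),(3,1),(4,1),(5,1) blocks Gᵀ, Bvᵀ, Beᵀ, Brᵀ, all other blocks zero. -/
def bigMt (Y A : Matrix (Fin n) (Fin n) ℝ) (G : Matrix (Fin n) (Fin p) ℝ)
    (Bv : Matrix (Fin n) (Fin q) ℝ) (Be : Matrix (Fin n) (Fin m) ℝ)
    (Br : Matrix (Fin n) (Fin s) ℝ) : Matrix (Idx n p q m s) (Idx n p q m s) ℝ :=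
  Matrix.of fun i j => match i, j with
  | Sum.inl i, Sum.inl j => (Y * Aᵀ + A * Y) i j
  | Sum.inl i, Sum.inr (Sum.inl j) => G i j
  | Sum.inr (Sum.inl i), Sum.inl j => Gᵀ i j
  | Sum.inl i, Sum.inr (Sum.inr (Sum.inl j)) => Bv i j
  | Sum.inr (Sum.inr (Sum.inl i)), Sum.inl j => Bvᵀ i j
  | Sum.inl i, Sum.inr (Sum.inr (Sum.inr (Sum.inl j))) => Be i j
  | Sum.inr (Sum.inr (Sum.inr (Sum.inl i))), Sum.inl j => Beᵀ i j
  | Sum.inl i, Sum.inr (Sum.inr (Sum.inr (Sum.inr (Sum.inl j)))) => Br i j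
  | Sum.inr (Sum.inr (Sum.inr (Sum.inr (Sum.inl i)))), Sum.inl j => Brᵀ i j
  | _, _ => 0

/-- 𝓝 = diag(P, 0, 0, 0, 0, −1). -/
def bigN (P : Matrix (Fin n) (Fin n) ℝ) : Matrix (Idx n p q m s) (Idx n p q m s) ℝ :=
  Matrix.of fun i j => match i, j with
  | Sum.inl i, Sum.inl j => P i j
  | Sum.inr (Sum.inr (Sum.inr (Sum.inr (Sum.inr _)))),
    Sum.inr (Sum.inr (Sum.inr (Sum.inr (Sum.inr _)))) => -1
  | _, _ => 0

/-- S_ω = diag(0, −W_ω, 0, 0, 0, 1). -/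
def Sw (W : Matrix (Fin p) (Fin p) ℝ) : Matrix (Idx n p q m s) (Idx n p q m s) ℝ :=
  Matrix.of fun i j => match i, j with
  | Sum.inr (Sum.inl i), Sum.inr (Sum.inl j) => -W i j
  | Sum.inr (Sum.inr (Sum.inr (Sum.inr (Sum.inr _)))),
    Sum.inr (Sum.inr (Sum.inr (Sum.inr (Sum.inr _)))) => 1
  | _, _ => 0

/-- S_v = diag(0, 0, −W_v, 0, 0, 1). -/
def Sv (W : Matrix (Fin q) (Fin q) ℝ) : Matrix (Idx n p q m s) (Idx n p q m s) ℝ :=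
  Matrix.of fun i j => match i, j with
  | Sum.inr (Sum.inr (Sum.inl i)), Sum.inr (Sum.inr (Sum.inl j)) => -W i j
  | Sum.inr (Sum.inr (Sum.inr (Sum.inr (Sum.inr _)))),
    Sum.inr (Sum.inr (Sum.inr (Sum.inr (Sum.inr _)))) => 1
  | _, _ => 0

/-- S_e = diag(0, 0, 0, −P̄_e, 0, 1). -/
def Se (W : Matrix (Fin m) (Fin m) ℝ) : Matrix (Idx n p q m s) (Idx n p q m s) ℝ :=
  Matrix.of fun i j => match i, j with
  | Sum.inr (Sum.inr (Sum.inr (Sum.inl i))),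
    Sum.inr (Sum.inr (Sum.inr (Sum.inl j))) => -W i j
  | Sum.inr (Sum.inr (Sum.inr (Sum.inr (Sum.inr _)))),
    Sum.inr (Sum.inr (Sum.inr (Sum.inr (Sum.inr _)))) => 1
  | _, _ => 0

/-- S_r = diag(0, 0, 0, 0, −Π, 1). -/
def Sr (W : Matrix (Fin s) (Fin s) ℝ) : Matrix (Idx n p q m s) (Idx n p q m s) ℝ :=
  Matrix.of fun i j => match i, j with
  | Sum.inr (Sum.inr (Sum.inr (Sum.inr (Sum.inl i)))),
    Sum.inr (Sum.inr (Sum.inr (Sum.inr (Sum.inl j)))) => -W i j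
  | Sum.inr (Sum.inr (Sum.inr (Sum.inr (Sum.inr _)))),
    Sum.inr (Sum.inr (Sum.inr (Sum.inr (Sum.inr _)))) => 1
  | _, _ => 0

end

/-!
The matrix `𝓜` is designed so that its quadratic form at `κ = (ζ, ω, v, ē, r, 1)` is the derivative
of the Lyapunov function `ζᵀ P ζ` along the system, while `κᵀ 𝓝 κ = ζᵀ P ζ - 1` and each `κᵀ S κ` is
the slack of the corresponding ellipsoid constraint. Since `κ` satisfies those constraints, the
S-procedure discards the multiplier terms of the matrix inequality and leaves
`0 ≤ -κᵀ 𝓜 κ - α κᵀ 𝓝 κ`.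
-/

section QuadraticForms

variable {R ι τ l k : Type*} [Fintype ι] [Fintype l] [Fintype k]

theorem nonneg_of_posSemidef_sub_sum_smul [CommRing R] [PartialOrder R] [StarRing R]
    [IsOrderedRing R] {t : Finset τ} {F : Matrix ι ι R} {S : τ → Matrix ι ι R} {β : τ → R}
    (hF : (F - ∑ i ∈ t, β i • S i).PosSemidef) (hβ : ∀ i ∈ t, 0 ≤ β i) {x : ι → R}
    (hx : ∀ i ∈ t, 0 ≤ star x ⬝ᵥ S i *ᵥ x) :
    0 ≤ star x ⬝ᵥ F *ᵥ x := by
  have hsum : 0 ≤ ∑ i ∈ t, β i * (star x ⬝ᵥ S i *ᵥ x) :=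
    Finset.sum_nonneg fun i hi => mul_nonneg (hβ i hi) (hx i hi)
  have hdiff := hF.dotProduct_mulVec_nonneg x
  simp only [sub_mulVec, sum_mulVec, smul_mulVec, dotProduct_sub, dotProduct_sum,
    dotProduct_smul, smul_eq_mul, sub_nonneg] at hdiff
  exact hsum.trans hdiff

theorem dotProduct_transpose_mulVec_mulVec_of_isSymm [CommSemiring R] {P : Matrix l l R}
    (hP : P.IsSymm) (B : Matrix l k R) (x : k → R) (z : l → R) :
    x ⬝ᵥ Bᵀ *ᵥ (P *ᵥ z) = z ⬝ᵥ P *ᵥ (B *ᵥ x) := by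
  rw [mulVec_transpose, dotProduct_comm, ← dotProduct_mulVec,
    ← vecMul_transpose, hP.eq, ← dotProduct_mulVec]

theorem dotProduct_fromBlocks_lyapunov_mulVec [CommSemiring R] {P : Matrix l l R} (hP : P.IsSymm)
    (A : Matrix l l R) (B : Matrix l k R) (z : l → R) (d : k → R) :
    Sum.elim z d ⬝ᵥ fromBlocks (Aᵀ * P + P * A) (P * B) (Bᵀ * P) 0 *ᵥ Sum.elim z d =
      2 * (z ⬝ᵥ P *ᵥ (A *ᵥ z + B *ᵥ d)) := by
  simp only [fromBlocks_mulVec, Sum.elim_comp_inl, Sum.elim_comp_inr, sumElim_dotProduct_sumElim,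
    add_mulVec, mulVec_add, zero_mulVec, add_zero, dotProduct_add, ← mulVec_mulVec,
    dotProduct_transpose_mulVec_mulVec_of_isSymm hP]
  ring

end QuadraticForms

section StackedVector

variable {n p q m s : ℕ}

/-- The matrix `[G Bv Be Br 0]` through which the stacked input `(ω, v, ē, r, 1)` drives the system.
The zero column matches the constant entry `1`. -/
def inputMatrix (G : Matrix (Fin n) (Fin p) ℝ) (Bv : Matrix (Fin n) (Fin q) ℝ)
    (Be : Matrix (Fin n) (Fin m) ℝ) (Br : Matrix (Fin n) (Fin s) ℝ) :
    Matrix (Fin n) (Fin p ⊕ Fin q ⊕ Fin m ⊕ Fin s ⊕ Fin 1) ℝ :=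
  fromCols G (fromCols Bv (fromCols Be (fromCols Br 0)))

theorem bigM_eq_fromBlocks (P A : Matrix (Fin n) (Fin n) ℝ) (G : Matrix (Fin n) (Fin p) ℝ)
    (Bv : Matrix (Fin n) (Fin q) ℝ) (Be : Matrix (Fin n) (Fin m) ℝ)
    (Br : Matrix (Fin n) (Fin s) ℝ) :
    bigM P A G Bv Be Br =
      fromBlocks (Aᵀ * P + P * A) (P * inputMatrix G Bv Be Br)
        ((inputMatrix G Bv Be Br)ᵀ * P) 0 := by
  ext (i | i | i | i | i | i) (j | j | j | j | j | j) <;>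
    simp [bigM, inputMatrix, transpose_fromCols]

variable (z : Fin n → ℝ) (w : Fin p → ℝ) (v : Fin q → ℝ) (e : Fin m → ℝ) (r : Fin s → ℝ)

theorem dotProduct_bigM_mulVec_stack {P : Matrix (Fin n) (Fin n) ℝ} (hP : P.IsSymm)
    (A : Matrix (Fin n) (Fin n) ℝ) (G : Matrix (Fin n) (Fin p) ℝ)
    (Bv : Matrix (Fin n) (Fin q) ℝ) (Be : Matrix (Fin n) (Fin m) ℝ)
    (Br : Matrix (Fin n) (Fin s) ℝ) :
    stack z w v e r ⬝ᵥ bigM P A G Bv Be Br *ᵥ stack z w v e r =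
      2 * (z ⬝ᵥ P *ᵥ (A *ᵥ z + G *ᵥ w + Bv *ᵥ v + Be *ᵥ e + Br *ᵥ r)) := by
  rw [bigM_eq_fromBlocks, stack, dotProduct_fromBlocks_lyapunov_mulVec hP]
  simp only [inputMatrix, fromCols_mulVec_sumElim, zero_mulVec, add_zero, add_assoc]

theorem dotProduct_bigN_mulVec_stack (P : Matrix (Fin n) (Fin n) ℝ) :
    stack z w v e r ⬝ᵥ bigN P *ᵥ stack z w v e r = z ⬝ᵥ P *ᵥ z - 1 := by
  simp [stack, bigN, dotProduct, mulVec, sub_eq_add_neg]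

theorem dotProduct_Sw_mulVec_stack (W : Matrix (Fin p) (Fin p) ℝ) :
    stack z w v e r ⬝ᵥ Sw W *ᵥ stack z w v e r = 1 - w ⬝ᵥ W *ᵥ w := by
  simp [stack, Sw, dotProduct, mulVec, neg_add_eq_sub]

theorem dotProduct_Sv_mulVec_stack (W : Matrix (Fin q) (Fin q) ℝ) :
    stack z w v e r ⬝ᵥ Sv W *ᵥ stack z w v e r = 1 - v ⬝ᵥ W *ᵥ v := by
  simp [stack, Sv, dotProduct, mulVec, neg_add_eq_sub]

theorem dotProduct_Se_mulVec_stack (W : Matrix (Fin m) (Fin m) ℝ) :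
    stack z w v e r ⬝ᵥ Se W *ᵥ stack z w v e r = 1 - e ⬝ᵥ W *ᵥ e := by
  simp [stack, Se, dotProduct, mulVec, neg_add_eq_sub]

theorem dotProduct_Sr_mulVec_stack (W : Matrix (Fin s) (Fin s) ℝ) :
    stack z w v e r ⬝ᵥ Sr W *ᵥ stack z w v e r = 1 - r ⬝ᵥ W *ᵥ r := by
  simp [stack, Sr, dotProduct, mulVec, neg_add_eq_sub]

end StackedVector

theorem stmt2_general {n p q m s : ℕ}
    (P A : Matrix (Fin n) (Fin n) ℝ) (hP : P.IsSymm)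
    (G : Matrix (Fin n) (Fin p) ℝ) (Bv : Matrix (Fin n) (Fin q) ℝ)
    (Be : Matrix (Fin n) (Fin m) ℝ) (Br : Matrix (Fin n) (Fin s) ℝ)
    (Wω : Matrix (Fin p) (Fin p) ℝ) (Wv : Matrix (Fin q) (Fin q) ℝ)
    (Pe : Matrix (Fin m) (Fin m) ℝ) (Pim : Matrix (Fin s) (Fin s) ℝ)
    (α βω βv βe βr : ℝ) (hβω : 0 ≤ βω) (hβv : 0 ≤ βv) (hβe : 0 ≤ βe) (hβr : 0 ≤ βr)
    (hLMI : (-(bigM P A G Bv Be Br) - α • bigN P - βω • Sw Wω - βv • Sv Wv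
              - βe • Se Pe - βr • Sr Pim).PosSemidef)
    (ζ : Fin n → ℝ) (ω : Fin p → ℝ) (v : Fin q → ℝ) (e : Fin m → ℝ) (r : Fin s → ℝ)
    (hω : ω ⬝ᵥ Wω *ᵥ ω ≤ 1) (hv : v ⬝ᵥ Wv *ᵥ v ≤ 1)
    (he : e ⬝ᵥ Pe *ᵥ e ≤ 1) (hr : r ⬝ᵥ Pim *ᵥ r ≤ 1) :
    2 * (ζ ⬝ᵥ P *ᵥ (A *ᵥ ζ + G *ᵥ ω + Bv *ᵥ v + Be *ᵥ e + Br *ᵥ r))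
      ≤ α * (1 - ζ ⬝ᵥ P *ᵥ ζ) := by
  have hSum : (-(bigM P A G Bv Be Br) - α • bigN P - ∑ i, ![βω, βv, βe, βr] i •
      ![Sw Wω, Sv Wv, Se Pe, Sr Pim] i).PosSemidef := by
    simpa [Fin.sum_univ_four, ← sub_sub] using hLMI
  have hβ : ∀ i ∈ Finset.univ, 0 ≤ ![βω, βv, βe, βr] i := by
    simp [Fin.forall_fin_succ, hβω, hβv, hβe, hβr]
  have hS : ∀ i ∈ Finset.univ, 0 ≤ star (stack ζ ω v e r) ⬝ᵥ
      ![Sw Wω, Sv Wv, Se Pe, Sr Pim] i *ᵥ stack ζ ω v e r := by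
    simp [Fin.forall_fin_succ, dotProduct_Sw_mulVec_stack, dotProduct_Sv_mulVec_stack,
      dotProduct_Se_mulVec_stack, dotProduct_Sr_mulVec_stack, hω, hv, he, hr]
  have hMN := nonneg_of_posSemidef_sub_sum_smul hSum hβ hS
  simp only [star_trivial, sub_mulVec, neg_mulVec, smul_mulVec, dotProduct_sub, dotProduct_neg,
    dotProduct_smul, smul_eq_mul, dotProduct_bigM_mulVec_stack _ _ _ _ _ hP,
    dotProduct_bigN_mulVec_stack] at hMN
  linarith

/-- Feasibility of the S-procedure LMI implies the Lyapunov decrease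
inequality 2 ζᵀ P (Aζ + Gω + B_v v + B_e ē + B_r r) ≤ α (1 − ζᵀ P ζ) for all ζ and all
disturbances inside their ellipsoids. -/
theorem stmt2 {n p q m s : ℕ}
    (P A : Matrix (Fin n) (Fin n) ℝ) (hP : P.PosDef)
    (G : Matrix (Fin n) (Fin p) ℝ) (Bv : Matrix (Fin n) (Fin q) ℝ)
    (Be : Matrix (Fin n) (Fin m) ℝ) (Br : Matrix (Fin n) (Fin s) ℝ)
    (Wω : Matrix (Fin p) (Fin p) ℝ) (hWω : Wω.PosDef)
    (Wv : Matrix (Fin q) (Fin q) ℝ) (hWv : Wv.PosDef)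
    (Pe : Matrix (Fin m) (Fin m) ℝ) (hPe : Pe.PosDef)
    (Pim : Matrix (Fin s) (Fin s) ℝ) (hPim : Pim.PosDef)
    (α βω βv βe βr : ℝ) (hα : 0 ≤ α) (hβω : 0 ≤ βω) (hβv : 0 ≤ βv)
    (hβe : 0 ≤ βe) (hβr : 0 ≤ βr)
    (hLMI : (-(bigM P A G Bv Be Br) - α • bigN P - βω • Sw Wω - βv • Sv Wv
              - βe • Se Pe - βr • Sr Pim).PosSemidef)
    (ζ : Fin n → ℝ) (ω : Fin p → ℝ) (v : Fin q → ℝ) (e : Fin m → ℝ) (r : Fin s → ℝ)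
    (hω : ω ⬝ᵥ Wω *ᵥ ω ≤ 1) (hv : v ⬝ᵥ Wv *ᵥ v ≤ 1)
    (he : e ⬝ᵥ Pe *ᵥ e ≤ 1) (hr : r ⬝ᵥ Pim *ᵥ r ≤ 1) :
    2 * (ζ ⬝ᵥ P *ᵥ (A *ᵥ ζ + G *ᵥ ω + Bv *ᵥ v + Be *ᵥ e + Br *ᵥ r))
      ≤ α * (1 - ζ ⬝ᵥ P *ᵥ ζ) :=
  stmt2_general P A (isHermitian_iff_isSymm.mp hP.isHermitian) G Bv Be Br Wω Wv Pe Pim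
    α βω βv βe βr hβω hβv hβe hβr hLMI ζ ω v e r hω hv he hr
end

section
/- Suppose there exist a symmetric positive definite n×n matrix Y, a constant α > 0, and constants β_ω, β_v, β_e, β_r ≥ 0 satisfying the LMI −𝓜̃ − α 𝓝̃ − β_ω S_ω − β_v S_v − β_e S_e − β_r S_r ⪰ 0, with 𝓜̃ the symmetric block matrix of size n+p+q+m+s+1 with (1,1) block Y Aᵀ + A Y, (2,1) block Gᵀ, (3,1) block B_vᵀ, (4,1) block B_eᵀ, (5,1) block B_rᵀ, all other blocks zero; 𝓝̃ = diag(Y, 0, 0, 0, 0, −1); S_ω = diag(0, −W_ω, 0, 0, 0, 1); S_v = diag(0, 0, −W_v, 0, 0, 1); S_e = diag(0, 0, 0, −P̄_e, 0, 1); S_r = diag(0, 0, 0, 0, −Π, 1). Then, with P = Y⁻¹, every differentiable trajectory of the closed-loop system under admissible disturbances satisfies ζ(t)ᵀ P ζ(t) ≤ 1 + (ζ(0)ᵀ P ζ(0) − 1) e^{−α t} for all t ≥ 0; in particular, the infinite-time reachable set from any initial condition is contained in every open neighborhood of the ellipsoid ℰ = {ζ : ζᵀ P ζ ≤ 1}, i.e.,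 limsup_{t→∞} ζ(t)ᵀ P ζ(t) ≤ 1. -/
open Matrix MeasureTheory Filter

/-!
Along a trajectory the quadratic form `V = ζᵀ Y⁻¹ ζ` has derivative `2 (Y⁻¹ ζ)ᵀ ζ̇`, which is the
value of the form `𝓜̃` at the stacked vector `κ = (Y⁻¹ ζ, ω, v, ē, r, 1)`. On admissible
disturbances the forms `S_ω`, `S_v`, `S_e`, `S_r` are nonnegative at `κ`, so evaluating the LMI at
`κ` (the S-procedure) leaves `V̇ ≤ -α (V - 1)`, and Grönwall's inequality concludes. Evaluating at
`Y⁻¹ ζ` instead of `ζ` replaces the congruence by `diag(Y⁻¹, I)` between `𝓜̃` and `𝓜`.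
-/

section QuadraticForms

variable {n p q m s : ℕ} (x : Fin n → ℝ) (w : Fin p → ℝ) (v : Fin q → ℝ) (e : Fin m → ℝ)
  (r : Fin s → ℝ)

theorem stack_dotProduct_bigMt_mulVec_stack {Y : Matrix (Fin n) (Fin n) ℝ} (hY : Y.IsSymm)
    (A : Matrix (Fin n) (Fin n) ℝ) (G : Matrix (Fin n) (Fin p) ℝ) (Bv : Matrix (Fin n) (Fin q) ℝ)
    (Be : Matrix (Fin n) (Fin m) ℝ) (Br : Matrix (Fin n) (Fin s) ℝ) :
    stack x w v e r ⬝ᵥ bigMt Y A G Bv Be Br *ᵥ stack x w v e r =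
      2 * (x ⬝ᵥ (A *ᵥ (Y *ᵥ x) + G *ᵥ w + Bv *ᵥ v + Be *ᵥ e + Br *ᵥ r)) := by
  have hmulVec : bigMt Y A G Bv Be Br *ᵥ stack x w v e r =
      Sum.elim ((A * Y)ᵀ *ᵥ x + (A * Y) *ᵥ x + G *ᵥ w + Bv *ᵥ v + Be *ᵥ e + Br *ᵥ r)
        (Sum.elim (Gᵀ *ᵥ x) (Sum.elim (Bvᵀ *ᵥ x) (Sum.elim (Beᵀ *ᵥ x)
          (Sum.elim (Brᵀ *ᵥ x) 0)))) := by
    rw [← Matrix.add_mulVec, Matrix.transpose_mul, hY.eq]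
    funext i
    rcases i with i | i | i | i | i | i <;>
      simp [mulVec, dotProduct, stack, bigMt, add_assoc]
  rw [hmulVec]
  simp only [stack, sumElim_dotProduct_sumElim, dotProduct_add, dotProduct_transpose_mulVec,
    dotProduct_zero, Matrix.mulVec_mulVec]
  ring

theorem stack_dotProduct_bigN_mulVec_stack (Y : Matrix (Fin n) (Fin n) ℝ) :
    stack x w v e r ⬝ᵥ bigN Y *ᵥ stack x w v e r = x ⬝ᵥ Y *ᵥ x - 1 := by
  simp [dotProduct, mulVec, stack, bigN, sub_eq_add_neg]

theorem stack_dotProduct_Sw_mulVec_stack (W : Matrix (Fin p) (Fin p) ℝ) :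
    stack x w v e r ⬝ᵥ Sw W *ᵥ stack x w v e r = 1 - w ⬝ᵥ W *ᵥ w := by
  simp [dotProduct, mulVec, stack, Sw, neg_add_eq_sub]

theorem stack_dotProduct_Sv_mulVec_stack (W : Matrix (Fin q) (Fin q) ℝ) :
    stack x w v e r ⬝ᵥ Sv W *ᵥ stack x w v e r = 1 - v ⬝ᵥ W *ᵥ v := by
  simp [dotProduct, mulVec, stack, Sv, neg_add_eq_sub]

theorem stack_dotProduct_Se_mulVec_stack (W : Matrix (Fin m) (Fin m) ℝ) :
    stack x w v e r ⬝ᵥ Se W *ᵥ stack x w v e r = 1 - e ⬝ᵥ W *ᵥ e := by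
  simp [dotProduct, mulVec, stack, Se, neg_add_eq_sub]

theorem stack_dotProduct_Sr_mulVec_stack (W : Matrix (Fin s) (Fin s) ℝ) :
    stack x w v e r ⬝ᵥ Sr W *ᵥ stack x w v e r = 1 - r ⬝ᵥ W *ᵥ r := by
  simp [dotProduct, mulVec, stack, Sr, neg_add_eq_sub]

end QuadraticForms

section Dissipation

theorem dotProduct_mulVec_nonneg_of_sub_smul {ι R : Type*} [Fintype ι] [CommRing R]
    [PartialOrder R] [IsOrderedRing R] {Q S : Matrix ι ι R} {β : R} {x : ι → R} (hβ : 0 ≤ β)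
    (hS : 0 ≤ x ⬝ᵥ S *ᵥ x) (hQS : 0 ≤ x ⬝ᵥ (Q - β • S) *ᵥ x) : 0 ≤ x ⬝ᵥ Q *ᵥ x := by
  rw [sub_mulVec, smul_mulVec, dotProduct_sub, dotProduct_smul, smul_eq_mul, sub_nonneg] at hQS
  exact (mul_nonneg hβ hS).trans hQS

theorem two_mul_dotProduct_le_of_lmi {n p q m s : ℕ} {A Y : Matrix (Fin n) (Fin n) ℝ}
    {G : Matrix (Fin n) (Fin p) ℝ} {Bv : Matrix (Fin n) (Fin q) ℝ}
    {Be : Matrix (Fin n) (Fin m) ℝ} {Br : Matrix (Fin n) (Fin s) ℝ}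
    {Wω : Matrix (Fin p) (Fin p) ℝ} {Wv : Matrix (Fin q) (Fin q) ℝ}
    {Pe : Matrix (Fin m) (Fin m) ℝ} {Pim : Matrix (Fin s) (Fin s) ℝ} {α βω βv βe βr : ℝ}
    (hY : Y.IsSymm) (hβω : 0 ≤ βω) (hβv : 0 ≤ βv) (hβe : 0 ≤ βe) (hβr : 0 ≤ βr)
    (hLMI : (-(bigMt Y A G Bv Be Br) - α • bigN Y - βω • Sw Wω - βv • Sv Wv
              - βe • Se Pe - βr • Sr Pim).PosSemidef)
    (x : Fin n → ℝ) {w : Fin p → ℝ} {v : Fin q → ℝ} {e : Fin m → ℝ} {r : Fin s → ℝ}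
    (hw : w ⬝ᵥ Wω *ᵥ w ≤ 1) (hv : v ⬝ᵥ Wv *ᵥ v ≤ 1) (he : e ⬝ᵥ Pe *ᵥ e ≤ 1)
    (hr : r ⬝ᵥ Pim *ᵥ r ≤ 1) :
    2 * (x ⬝ᵥ (A *ᵥ (Y *ᵥ x) + G *ᵥ w + Bv *ᵥ v + Be *ᵥ e + Br *ᵥ r)) ≤
      -α * (x ⬝ᵥ Y *ᵥ x - 1) := by
  set κ := stack x w v e r
  have hSw : 0 ≤ κ ⬝ᵥ Sw Wω *ᵥ κ := by rwa [stack_dotProduct_Sw_mulVec_stack, sub_nonneg]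
  have hSv : 0 ≤ κ ⬝ᵥ Sv Wv *ᵥ κ := by rwa [stack_dotProduct_Sv_mulVec_stack, sub_nonneg]
  have hSe : 0 ≤ κ ⬝ᵥ Se Pe *ᵥ κ := by rwa [stack_dotProduct_Se_mulVec_stack, sub_nonneg]
  have hSr : 0 ≤ κ ⬝ᵥ Sr Pim *ᵥ κ := by rwa [stack_dotProduct_Sr_mulVec_stack, sub_nonneg]
  have hMN : 0 ≤ κ ⬝ᵥ (-(bigMt Y A G Bv Be Br) - α • bigN Y) *ᵥ κ :=
    dotProduct_mulVec_nonneg_of_sub_smul hβω hSw <|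
    dotProduct_mulVec_nonneg_of_sub_smul hβv hSv <|
    dotProduct_mulVec_nonneg_of_sub_smul hβe hSe <|
    dotProduct_mulVec_nonneg_of_sub_smul hβr hSr <| hLMI.dotProduct_mulVec_nonneg κ
  rw [sub_mulVec, neg_mulVec, smul_mulVec, dotProduct_sub, dotProduct_neg, dotProduct_smul,
    smul_eq_mul, stack_dotProduct_bigMt_mulVec_stack x w v e r hY,
    stack_dotProduct_bigN_mulVec_stack] at hMN
  linarith

end Dissipation

section Derivatives

variable {𝕜 𝔸 ι κ : Type*} [NontriviallyNormedField 𝕜] [Fintype ι] {s : Set 𝕜} {t : 𝕜}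

theorem hasDerivWithinAt_mulVec [NormedRing 𝔸] [NormedAlgebra 𝕜 𝔸] [Finite κ] {f : 𝕜 → ι → 𝔸}
    {f' : ι → 𝔸} (M : Matrix κ ι 𝔸) (hf : HasDerivWithinAt f f' s t) :
    HasDerivWithinAt (fun u ↦ M *ᵥ f u) (M *ᵥ f') s t := by
  have := Fintype.ofFinite κ
  exact hasDerivWithinAt_pi.2 fun i ↦
    HasDerivWithinAt.fun_sum fun j _ ↦ (hasDerivWithinAt_pi.1 hf j).const_mul (M i j)

theorem hasDerivWithinAt_dotProduct [NormedRing 𝔸] [NormedAlgebra 𝕜 𝔸] {f g : 𝕜 → ι → 𝔸}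
    {f' g' : ι → 𝔸} (hf : HasDerivWithinAt f f' s t) (hg : HasDerivWithinAt g g' s t) :
    HasDerivWithinAt (fun u ↦ f u ⬝ᵥ g u) (f' ⬝ᵥ g t + f t ⬝ᵥ g') s t := by
  simp only [dotProduct, ← Finset.sum_add_distrib]
  exact HasDerivWithinAt.fun_sum fun i _ ↦
    (hasDerivWithinAt_pi.1 hf i).mul (hasDerivWithinAt_pi.1 hg i)

theorem hasDerivWithinAt_dotProduct_mulVec_self [NormedCommRing 𝔸] [NormedAlgebra 𝕜 𝔸]
    {P : Matrix ι ι 𝔸} (hP : P.IsSymm) {f : 𝕜 → ι → 𝔸} {f' : ι → 𝔸}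
    (hf : HasDerivWithinAt f f' s t) :
    HasDerivWithinAt (fun u ↦ f u ⬝ᵥ P *ᵥ f u) (2 * ((P *ᵥ f t) ⬝ᵥ f')) s t := by
  convert! hasDerivWithinAt_dotProduct hf (hasDerivWithinAt_mulVec P hf) using 1
  rw [← dotProduct_transpose_mulVec P f', hP.eq, ← two_mul, dotProduct_comm]

end Derivatives

section Asymptotics

theorem le_add_mul_exp_of_hasDerivWithinAt_le {f f' : ℝ → ℝ} {a c K : ℝ}
    (hf : ContinuousOn f (Set.Ici a))
    (hf' : ∀ t ∈ Set.Ici a, HasDerivWithinAt f (f' t) (Set.Ici t) t)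
    (hle : ∀ t ∈ Set.Ici a, f' t ≤ K * (f t - c)) :
    ∀ t ∈ Set.Ici a, f t ≤ c + (f a - c) * Real.exp (K * (t - a)) := by
  intro t ht
  have hgronwall : f t - c ≤ gronwallBound (f a - c) K 0 (t - a) :=
    le_gronwallBound_of_liminf_deriv_right_le (f := fun u ↦ f u - c) (f' := f')
      ((hf.mono Set.Icc_subset_Ici_self).sub continuousOn_const)
      (fun u hu _ hr ↦ ((hf' u hu.1).sub_const c).liminf_right_slope_le hr) le_rfl
      (fun u hu ↦ by simpa only [add_zero] using hle u hu.1) t (Set.right_mem_Icc.2 ht)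
  rw [gronwallBound_ε0] at hgronwall
  linarith

theorem tendsto_add_mul_exp_neg_mul_atTop {α : ℝ} (hα : 0 < α) (c C : ℝ) :
    Tendsto (fun t ↦ c + C * Real.exp (-α * t)) atTop (nhds c) := by
  have hexp : Tendsto (fun t ↦ Real.exp (-α * t)) atTop (nhds 0) :=
    Real.tendsto_exp_atBot.comp (tendsto_id.const_mul_atTop_of_neg (neg_lt_zero.2 hα))
  simpa only [mul_zero, add_zero] using (hexp.const_mul C).const_add c

theorem limsup_le_of_eventuallyLE_of_tendsto {ι R : Type*} [ConditionallyCompleteLinearOrder R]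
    [TopologicalSpace R] [OrderTopology R] {l : Filter ι} [l.NeBot] {f g : ι → R} {c : R}
    (hfg : f ≤ᶠ[l] g) (hg : Tendsto g l (nhds c))
    (hf : l.IsCoboundedUnder (· ≤ ·) f) : limsup f l ≤ c :=
  (limsup_le_limsup hfg hf hg.isBoundedUnder_le).trans_eq hg.limsup_eq

end Asymptotics

-- Right derivatives admit disturbances with jumps, for which `ζ` is only piecewise differentiable.
theorem stmt6_general {n p q m s : ℕ}
    (A : Matrix (Fin n) (Fin n) ℝ)
    (G : Matrix (Fin n) (Fin p) ℝ) (Bv : Matrix (Fin n) (Fin q) ℝ)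
    (Be : Matrix (Fin n) (Fin m) ℝ) (Br : Matrix (Fin n) (Fin s) ℝ)
    (Wω : Matrix (Fin p) (Fin p) ℝ) (Wv : Matrix (Fin q) (Fin q) ℝ)
    (Pe : Matrix (Fin m) (Fin m) ℝ) (Pim : Matrix (Fin s) (Fin s) ℝ)
    (Y : Matrix (Fin n) (Fin n) ℝ) (hY : Y.PosDef)
    (α βω βv βe βr : ℝ) (hα : 0 < α) (hβω : 0 ≤ βω) (hβv : 0 ≤ βv)
    (hβe : 0 ≤ βe) (hβr : 0 ≤ βr)
    (hLMI : (-(bigMt Y A G Bv Be Br) - α • bigN Y - βω • Sw Wω - βv • Sv Wv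
              - βe • Se Pe - βr • Sr Pim).PosSemidef)
    (ζ : ℝ → Fin n → ℝ) (ω : ℝ → Fin p → ℝ) (v : ℝ → Fin q → ℝ)
    (e : ℝ → Fin m → ℝ) (r : ℝ → Fin s → ℝ)
    (hζ : ContinuousOn ζ (Set.Ici 0))
    (hdyn : ∀ t ∈ Set.Ici (0 : ℝ), HasDerivWithinAt ζ
      (A *ᵥ ζ t + G *ᵥ ω t + Bv *ᵥ v t + Be *ᵥ e t + Br *ᵥ r t) (Set.Ici t) t)
    (hω : ∀ t ∈ Set.Ici (0 : ℝ), ω t ⬝ᵥ Wω *ᵥ ω t ≤ 1)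
    (hv : ∀ t ∈ Set.Ici (0 : ℝ), v t ⬝ᵥ Wv *ᵥ v t ≤ 1)
    (he : ∀ t ∈ Set.Ici (0 : ℝ), e t ⬝ᵥ Pe *ᵥ e t ≤ 1)
    (hr : ∀ t ∈ Set.Ici (0 : ℝ), r t ⬝ᵥ Pim *ᵥ r t ≤ 1) :
    (∀ t ∈ Set.Ici (0 : ℝ), ζ t ⬝ᵥ Y⁻¹ *ᵥ ζ t
        ≤ 1 + (ζ 0 ⬝ᵥ Y⁻¹ *ᵥ ζ 0 - 1) * Real.exp (-α * t)) ∧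
      limsup (fun t ↦ ζ t ⬝ᵥ Y⁻¹ *ᵥ ζ t) atTop ≤ 1 := by
  have hYsymm : Y.IsSymm := isHermitian_iff_isSymm.1 hY.isHermitian
  have hPsymm : (Y⁻¹).IsSymm := isHermitian_iff_isSymm.1 hY.inv.isHermitian
  have hYP (z : Fin n → ℝ) : Y *ᵥ (Y⁻¹ *ᵥ z) = z := by
    rw [mulVec_mulVec, mul_nonsing_inv _ ((isUnit_iff_isUnit_det Y).1 hY.isUnit), one_mulVec]
  have hderiv (t : ℝ) (ht : t ∈ Set.Ici 0) :=
    hasDerivWithinAt_dotProduct_mulVec_self hPsymm (hdyn t ht)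
  have hdecay (t : ℝ) (ht : t ∈ Set.Ici 0) :
      2 * ((Y⁻¹ *ᵥ ζ t) ⬝ᵥ (A *ᵥ ζ t + G *ᵥ ω t + Bv *ᵥ v t + Be *ᵥ e t + Br *ᵥ r t)) ≤
        -α * (ζ t ⬝ᵥ Y⁻¹ *ᵥ ζ t - 1) := by
    simpa only [hYP, dotProduct_comm _ (ζ t)] using two_mul_dotProduct_le_of_lmi hYsymm
      hβω hβv hβe hβr hLMI (Y⁻¹ *ᵥ ζ t) (hω t ht) (hv t ht) (he t ht) (hr t ht)
  have hbound : ∀ t ∈ Set.Ici (0 : ℝ), ζ t ⬝ᵥ Y⁻¹ *ᵥ ζ t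
      ≤ 1 + (ζ 0 ⬝ᵥ Y⁻¹ *ᵥ ζ 0 - 1) * Real.exp (-α * t) := by
    simpa only [sub_zero] using
      le_add_mul_exp_of_hasDerivWithinAt_le (by fun_prop) hderiv hdecay
  have hnonneg (t : ℝ) : 0 ≤ ζ t ⬝ᵥ Y⁻¹ *ᵥ ζ t :=
    hY.inv.posSemidef.dotProduct_mulVec_nonneg (ζ t)
  exact ⟨hbound, limsup_le_of_eventuallyLE_of_tendsto
    ((eventually_ge_atTop 0).mono hbound) (tendsto_add_mul_exp_neg_mul_atTop hα 1 _)
    (isCoboundedUnder_le_of_le atTop hnonneg)⟩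

open Filter in
/-- **exponential convergence into the ellipsoid.** If Y ≻ 0, α > 0 and the
linearized LMI is feasible, then with P = Y⁻¹ every admissible trajectory satisfies
ζ(t)ᵀ P ζ(t) ≤ 1 + (ζ(0)ᵀ P ζ(0) − 1) e^{−αt} for all t ≥ 0, and in particular
limsup_{t→∞} ζ(t)ᵀ P ζ(t) ≤ 1. -/
theorem stmt6 {n p q m s : ℕ}
    (A : Matrix (Fin n) (Fin n) ℝ)
    (G : Matrix (Fin n) (Fin p) ℝ) (Bv : Matrix (Fin n) (Fin q) ℝ)
    (Be : Matrix (Fin n) (Fin m) ℝ) (Br : Matrix (Fin n) (Fin s) ℝ)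
    (Wω : Matrix (Fin p) (Fin p) ℝ) (hWω : Wω.PosDef)
    (Wv : Matrix (Fin q) (Fin q) ℝ) (hWv : Wv.PosDef)
    (Pe : Matrix (Fin m) (Fin m) ℝ) (hPe : Pe.PosDef)
    (Pim : Matrix (Fin s) (Fin s) ℝ) (hPim : Pim.PosDef)
    (Y : Matrix (Fin n) (Fin n) ℝ) (hY : Y.PosDef)
    (α βω βv βe βr : ℝ) (hα : 0 < α) (hβω : 0 ≤ βω) (hβv : 0 ≤ βv)
    (hβe : 0 ≤ βe) (hβr : 0 ≤ βr)
    (hLMI : (-(bigMt Y A G Bv Be Br) - α • bigN Y - βω • Sw Wω - βv • Sv Wv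
              - βe • Se Pe - βr • Sr Pim).PosSemidef)
    (ζ : ℝ → Fin n → ℝ) (ω : ℝ → Fin p → ℝ) (v : ℝ → Fin q → ℝ)
    (e : ℝ → Fin m → ℝ) (r : ℝ → Fin s → ℝ)
    (hdyn : ∀ t ∈ Set.Ici (0:ℝ), HasDerivAt ζ
      (A *ᵥ ζ t + G *ᵥ ω t + Bv *ᵥ v t + Be *ᵥ e t + Br *ᵥ r t) t)
    (hω : ∀ t ∈ Set.Ici (0:ℝ), ω t ⬝ᵥ Wω *ᵥ ω t ≤ 1)
    (hv : ∀ t ∈ Set.Ici (0:ℝ), v t ⬝ᵥ Wv *ᵥ v t ≤ 1)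
    (he : ∀ t ∈ Set.Ici (0:ℝ), e t ⬝ᵥ Pe *ᵥ e t ≤ 1)
    (hr : ∀ t ∈ Set.Ici (0:ℝ), r t ⬝ᵥ Pim *ᵥ r t ≤ 1) :
    (∀ t ∈ Set.Ici (0:ℝ), ζ t ⬝ᵥ Y⁻¹ *ᵥ ζ t
        ≤ 1 + (ζ 0 ⬝ᵥ Y⁻¹ *ᵥ ζ 0 - 1) * Real.exp (-α * t)) ∧
      limsup (fun t => ζ t ⬝ᵥ Y⁻¹ *ᵥ ζ t) atTop ≤ 1 :=
  stmt6_general A G Bv Be Br Wω Wv Pe Pim Y hY α βω βv βe βr hα hβω hβv hβe hβr hLMI ζ ω v e r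
    (fun t ht ↦ (hdyn t ht).continuousAt.continuousWithinAt)
    (fun t ht ↦ (hdyn t ht).hasDerivWithinAt) hω hv he hr
end
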